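/- Let f : ℝ≥0∞ → ℝ≥0∞ be monotone, α, β ∈ ℝ≥0, and g = α·f + β. Then for every pGCL program S and every expectation X, wp[T'_g(S)](α·X) = α·wp[T'_f(S)](X), where T'_f and T'_g are the auxiliary reward transformations using the same fresh ghost variable τ. -/

import Mathlib

open ENNReal

/-- Program states: maps from variables to extended non-negative reals. -/
abbrev PState (V : Type) := V → ℝ≥0∞

/-- Expectations: maps from states to extended non-negative reals. -/
abbrev Expct (V : Type) := PState V → ℝ≥0∞

/-- Syntax of pGCL programs. -/
inductive pGCL (V : Type) : Type 1
  | skip : pGCL V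
  | assign : V → Expct V → pGCL V
  | reward : Expct V → pGCL V
  | seq : pGCL V → pGCL V → pGCL V
  | prob : (p : ℝ≥0∞) → p ≤ 1 → pGCL V → pGCL V → pGCL V
  | ifte : (PState V → Bool) → pGCL V → pGCL V → pGCL V
  | loop : (PState V → Bool) → pGCL V → pGCL V

variable {V : Type} [DecidableEq V]

/-- The weakest pre-expectation transformer, bundled as an order hom. -/
noncomputable def wpHom : pGCL V → (Expct V →o Expct V)
  | .skip => OrderHom.id
  | .assign x e => ⟨fun X σ => X (Function.update σ x (e σ)), fun _ _ h σ => h _⟩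
  | .reward e => ⟨fun X σ => e σ + X σ, fun _ _ h σ => add_le_add le_rfl (h σ)⟩
  | .seq S₁ S₂ => (wpHom S₁).comp (wpHom S₂)
  | .prob p _ S₁ S₂ =>
      ⟨fun X σ => p * wpHom S₁ X σ + (1 - p) * wpHom S₂ X σ, by
        intro X Y h σ
        exact add_le_add (mul_le_mul' (le_refl p) ((wpHom S₁).monotone h σ))
          (mul_le_mul' (le_refl (1 - p)) ((wpHom S₂).monotone h σ))⟩
  | .ifte b S₁ S₂ =>
      ⟨fun X σ => if b σ then wpHom S₁ X σ else wpHom S₂ X σ, by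
        intro X Y h σ
        dsimp only
        split
        · exact (wpHom S₁).monotone h σ
        · exact (wpHom S₂).monotone h σ⟩
  | .loop b S =>
      ⟨fun X => OrderHom.lfp
        ⟨fun Y σ => if b σ then wpHom S Y σ else X σ, by
          intro Y₁ Y₂ h σ
          dsimp only
          split
          · exact (wpHom S).monotone h σ
          · exact le_rfl⟩, by
        intro X₁ X₂ h
        apply OrderHom.lfp_le
        have := OrderHom.map_lfp
          (⟨fun Y σ => if b σ then wpHom S Y σ else X₂ σ, by
            intro Y₁ Y₂ h σ
            dsimp only
            split
            · exact (wpHom S).monotone h σ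
            · exact le_rfl⟩ : Expct V →o Expct V)
        refine le_trans (fun σ => ?_) (le_of_eq this)
        show (if b σ then wpHom S _ σ else X₁ σ) ≤ (if b σ then wpHom S _ σ else X₂ σ)
        split
        · exact le_rfl
        · exact h σ⟩

/-- The weakest pre-expectation `wp[S](X)`. -/
noncomputable def wp (S : pGCL V) (X : Expct V) : Expct V := wpHom S X

/-- An expression does not depend on variable `τ`. -/
def UnusedE (τ : V) (e : Expct V) : Prop := ∀ σ v, e (Function.update σ τ v) = e σ

/-- A Boolean guard does not depend on variable `τ`. -/
def UnusedB (τ : V) (b : PState V → Bool) : Prop := ∀ σ v, b (Function.update σ τ v) = b σ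

/-- Variable `τ` does not occur in the program `S`. -/
def NotOccurs (τ : V) : pGCL V → Prop
  | .skip => True
  | .assign x e => x ≠ τ ∧ UnusedE τ e
  | .reward e => UnusedE τ e
  | .seq S₁ S₂ => NotOccurs τ S₁ ∧ NotOccurs τ S₂
  | .prob _ _ S₁ S₂ => NotOccurs τ S₁ ∧ NotOccurs τ S₂
  | .ifte b S₁ S₂ => UnusedB τ b ∧ NotOccurs τ S₁ ∧ NotOccurs τ S₂
  | .loop b S => UnusedB τ b ∧ NotOccurs τ S

/-- Auxiliary reward transformation `T'_f` with ghost variable `τ`: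
replaces `reward(e)` by `reward(f(τ+e) − f(τ)); τ := τ + e`. -/
noncomputable def Taux (τ : V) (f : ℝ≥0∞ → ℝ≥0∞) : pGCL V → pGCL V
  | .reward e =>
      .seq (.reward fun σ => f (σ τ + e σ) - f (σ τ)) (.assign τ (fun σ => σ τ + e σ))
  | .seq S₁ S₂ => .seq (Taux τ f S₁) (Taux τ f S₂)
  | .prob p hp S₁ S₂ => .prob p hp (Taux τ f S₁) (Taux τ f S₂)
  | .ifte b S₁ S₂ => .ifte b (Taux τ f S₁) (Taux τ f S₂)
  | .loop b S => .loop b (Taux τ f S)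
  | .skip => .skip
  | .assign x e => .assign x e

/-- Full reward transformation `T_f(S) = τ := 0; reward(f(0)); T'_f(S)`. -/
noncomputable def Tfull (τ : V) (f : ℝ≥0∞ → ℝ≥0∞) (S : pGCL V) : pGCL V :=
  .seq (.assign τ (fun _ => 0)) (.seq (.reward fun _ => f 0) (Taux τ f S))

/-!
Since `α` and `β` are finite, `(α·a + β) − (α·b + β) = α·(a − b)`, so `T'_{α·f+β}(S)` is literally
`T'_f(S)` with all rewards multiplied by `α`. Scaling rewards and postexpectation by `α` scales `wp`
by `α`: the loop case is least fixed point fusion along `X ↦ α • X`, which preserves suprema;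
this works for `α = 0` as well, where dividing the fixed point equation by `α` would not.
-/

theorem map_lfp_of_semiconj {A B : Type*} [CompleteLattice A] [CompleteLattice B]
    {l : A → B} (hl : ∀ s, l (sSup s) = sSup (l '' s)) {F : A →o A} {G : B →o B}
    (hFG : Function.Semiconj l F G) : l F.lfp = G.lfp := by
  apply le_antisymm
  · refine F.lfp_induction (p := fun a => l a ≤ G.lfp) (fun a ha _ => ?_) (fun s hs => ?_)
    · rw [hFG a]
      exact G.map_le_lfp ha
    · rw [hl]
      exact sSup_le (Set.forall_mem_image.2 hs)
  · refine G.lfp_le_fixed ?_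
    rw [← hFG F.lfp, F.map_lfp]

theorem const_smul_sSup {ι : Type*} (c : ℝ≥0∞) (s : Set (ι → ℝ≥0∞)) :
    c • sSup s = sSup ((fun X => c • X) '' s) := by
  funext i
  simp only [Pi.smul_apply, sSup_apply_eq_sSup_image, sSup_image, iSup_image,
    Function.eval, ENNReal.smul_iSup]

theorem wp_reward (e X : Expct V) : wp (.reward e) X = e + X := rfl

theorem wp_seq (S₁ S₂ : pGCL V) (X : Expct V) : wp (.seq S₁ S₂) X = wp S₁ (wp S₂ X) := rfl

theorem wp_prob (p : ℝ≥0∞) (hp : p ≤ 1) (S₁ S₂ : pGCL V) (X : Expct V) :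
    wp (.prob p hp S₁ S₂) X = p • wp S₁ X + (1 - p) • wp S₂ X := rfl

theorem wp_ifte (b : PState V → Bool) (S₁ S₂ : pGCL V) (X : Expct V) :
    wp (.ifte b S₁ S₂) X = fun σ => if b σ then wp S₁ X σ else wp S₂ X σ := rfl

/-- The characteristic functional `Y ↦ [b]·wp[S](Y) + [¬b]·X` of `while(b){S}` with respect to the
postexpectation `X`; its least fixed point is `wp[while(b){S}](X)`. -/
noncomputable def loopFunctional (b : PState V → Bool) (S : pGCL V) (X : Expct V) :
    Expct V →o Expct V where
  toFun Y σ := if b σ then wp S Y σ else X σ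
  monotone' Y₁ Y₂ h σ := by
    dsimp only
    split
    · exact (wpHom S).monotone h σ
    · exact le_rfl

theorem loopFunctional_apply (b : PState V → Bool) (S : pGCL V) (X Y : Expct V) :
    loopFunctional b S X Y = fun σ => if b σ then wp S Y σ else X σ := rfl

theorem wp_loop (b : PState V → Bool) (S : pGCL V) (X : Expct V) :
    wp (.loop b S) X = (loopFunctional b S X).lfp := rfl

/-- The program obtained from `S` by multiplying the amount collected at each `reward` by `c`. -/
noncomputable def pGCL.scaleRewards {V : Type} (c : ℝ≥0∞) : pGCL V → pGCL V
  | .skip => .skip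
  | .assign x e => .assign x e
  | .reward e => .reward (c • e)
  | .seq S₁ S₂ => .seq (S₁.scaleRewards c) (S₂.scaleRewards c)
  | .prob p hp S₁ S₂ => .prob p hp (S₁.scaleRewards c) (S₂.scaleRewards c)
  | .ifte b S₁ S₂ => .ifte b (S₁.scaleRewards c) (S₂.scaleRewards c)
  | .loop b S => .loop b (S.scaleRewards c)

theorem wp_scaleRewards_smul (c : ℝ≥0∞) (S : pGCL V) (X : Expct V) :
    wp (S.scaleRewards c) (c • X) = c • wp S X := by
  induction S generalizing X with
  | skip => rfl
  | assign x e => rfl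
  | reward e => simp only [pGCL.scaleRewards, wp_reward, smul_add]
  | seq S₁ S₂ ih₁ ih₂ => simp only [pGCL.scaleRewards, wp_seq, ih₁, ih₂]
  | prob p hp S₁ S₂ ih₁ ih₂ =>
    simp only [pGCL.scaleRewards, wp_prob, ih₁, ih₂, smul_add, smul_comm c]
  | ifte b S₁ S₂ ih₁ ih₂ =>
    simp only [pGCL.scaleRewards, wp_ifte, ih₁, ih₂]
    funext σ
    exact (apply_ite (c * ·) _ _ _).symm
  | loop b S ih =>
    have semiconj : Function.Semiconj (fun Y : Expct V => c • Y)
        (loopFunctional b S X) (loopFunctional b (S.scaleRewards c) (c • X)) := by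
      intro Y
      simp only [loopFunctional_apply, ih]
      funext σ
      exact apply_ite (c * ·) _ _ _
    rw [pGCL.scaleRewards, wp_loop, wp_loop]
    exact (map_lfp_of_semiconj (const_smul_sSup c) semiconj).symm

theorem affine_tsub_affine {c d : ℝ≥0∞} (hc : c ≠ ∞) (hd : d ≠ ∞) (x y : ℝ≥0∞) :
    (c * x + d) - (c * y + d) = c * (x - y) := by
  rw [ENNReal.add_sub_add_eq_sub_right hd, ENNReal.mul_sub fun _ _ => hc]

theorem Taux_affine {V : Type} {c d : ℝ≥0∞} (hc : c ≠ ∞) (hd : d ≠ ∞) (τ : V) (f : ℝ≥0∞ → ℝ≥0∞)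
    (S : pGCL V) : Taux τ (fun x => c * f x + d) S = (Taux τ f S).scaleRewards c := by
  induction S with
  | skip => rfl
  | assign x e => rfl
  | reward e =>
    simp only [Taux, pGCL.scaleRewards, affine_tsub_affine hc hd]
    rfl
  | seq S₁ S₂ ih₁ ih₂ => simp only [Taux, pGCL.scaleRewards, ih₁, ih₂]
  | prob p hp S₁ S₂ ih₁ ih₂ => simp only [Taux, pGCL.scaleRewards, ih₁, ih₂]
  | ifte b S₁ S₂ ih₁ ih₂ => simp only [Taux, pGCL.scaleRewards, ih₁, ih₂]
  | loop b S ih => simp only [Taux, pGCL.scaleRewards, ih]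

theorem wp_Taux_scale_general (f : ℝ≥0∞ → ℝ≥0∞) (α β : NNReal) (τ : V) (S : pGCL V)
    (X : Expct V) :
    wp (Taux τ (fun x => α * f x + β) S) (fun σ => α * X σ)
      = fun σ => α * wp (Taux τ f S) X σ := by
  rw [Taux_affine coe_ne_top coe_ne_top]
  exact wp_scaleRewards_smul α (Taux τ f S) X

/-- The auxiliary transformation for `g = α·f + β` preserves
scalar multiplication: `wp[T'_g(S)](α·X) = α·wp[T'_f(S)](X)`. -/
theorem wp_Taux_scale (f : ℝ≥0∞ → ℝ≥0∞) (hf : Monotone f) (α β : NNReal)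
    (τ : V) (S : pGCL V) (hτ : NotOccurs τ S) (X : Expct V) :
    wp (Taux τ (fun x => α * f x + β) S) (fun σ => α * X σ)
      = fun σ => α * wp (Taux τ f S) X σ :=
  wp_Taux_scale_general f α β τ S X
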